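/- Let f : ℝ^d → ℝ be L-smooth, let μ > 0, and let f_μ be its uniform smoothing over the unit ball. Then for every x ∈ ℝ^d, ‖∇f_μ(x) − ∇f(x)‖² ≤ μ² L² d² / 4. -/

import Mathlib

open MeasureTheory ProbabilityTheory

/-- The uniform distribution on the closed unit ball of `ℝ^d`. -/
noncomputable def uniformBall (d : ℕ) : Measure (EuclideanSpace ℝ (Fin d)) :=
  (volume (Metric.closedBall (0 : EuclideanSpace ℝ (Fin d)) 1))⁻¹ •
    volume.restrict (Metric.closedBall (0 : EuclideanSpace ℝ (Fin d)) 1)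

/-- The uniform distribution on the unit sphere of `ℝ^d`, viewed as a measure on `ℝ^d`. -/
noncomputable def uniformSphere (d : ℕ) : Measure (EuclideanSpace ℝ (Fin d)) :=
  ((volume : Measure (EuclideanSpace ℝ (Fin d))).toSphere Set.univ)⁻¹ •
    Measure.map Subtype.val (volume : Measure (EuclideanSpace ℝ (Fin d))).toSphere

instance uniformBall_isProb (d : ℕ) : IsProbabilityMeasure (uniformBall d) := by
  constructor
  have h1 : volume (Metric.closedBall (0 : EuclideanSpace ℝ (Fin d)) 1) ≠ 0 :=
    (Metric.measure_closedBall_pos volume _ one_pos).ne'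
  have h2 : volume (Metric.closedBall (0 : EuclideanSpace ℝ (Fin d)) 1) ≠ ⊤ :=
    measure_closedBall_lt_top.ne
  simp [uniformBall, ENNReal.inv_mul_cancel h1 h2]

lemma uniformBall_ae (d : ℕ) : ∀ᵐ v ∂(uniformBall d), ‖v‖ ≤ 1 := by
  unfold uniformBall
  apply Measure.ae_smul_measure
  filter_upwards [ae_restrict_mem Metric.isClosed_closedBall.measurableSet] with v hv
  simpa using hv

lemma uniformBall_norm (d : ℕ) (hd : 0 < d) :
    ∫ v, ‖v‖ ∂(uniformBall d) = d / (d + 1) := by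
  haveI : Nonempty (Fin d) := ⟨⟨0, hd⟩⟩
  have h1 : volume (Metric.closedBall (0 : EuclideanSpace ℝ (Fin d)) 1) ≠ 0 :=
    (Metric.measure_closedBall_pos volume _ one_pos).ne'
  have h2 : volume (Metric.closedBall (0 : EuclideanSpace ℝ (Fin d)) 1) ≠ ⊤ :=
    measure_closedBall_lt_top.ne
  have h3 : ∫ v in Metric.closedBall (0 : EuclideanSpace ℝ (Fin d)) 1, ‖v‖
      = ∫ v : EuclideanSpace ℝ (Fin d), (Set.Iic (1:ℝ)).indicator id ‖v‖ := by
    rw [← integral_indicator Metric.isClosed_closedBall.measurableSet]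
    congr 1
    ext v
    by_cases hv : ‖v‖ ≤ 1
    · rw [Set.indicator_of_mem (by simpa using hv), Set.indicator_of_mem (by simpa using hv)]
      rfl
    · rw [Set.indicator_of_notMem (by simpa using hv), Set.indicator_of_notMem (by simpa using hv)]
  have h4 : ∫ y in Set.Ioi (0:ℝ), y ^ (d - 1) • (Set.Iic (1:ℝ)).indicator id y
      = 1 / (d + 1) := by
    have : (fun y : ℝ => y ^ (d - 1) • (Set.Iic (1:ℝ)).indicator id y)
        = (Set.Iic (1:ℝ)).indicator (fun y => y ^ d) := by
      ext y
      by_cases hy : y ≤ 1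
      · simp [Set.indicator_apply, hy, ← pow_succ, Nat.sub_add_cancel hd]
      · simp [Set.indicator_apply, hy]
    rw [this, setIntegral_indicator measurableSet_Iic, Set.Ioi_inter_Iic,
      ← intervalIntegral.integral_of_le zero_le_one, integral_pow]
    simp
  unfold uniformBall
  rw [integral_smul_measure, h3, integral_fun_norm_addHaar, finrank_euclideanSpace_fin, h4,
    measureReal_def, ← Measure.addHaar_closedBall_eq_addHaar_ball, ENNReal.toReal_inv]
  have h5 := ENNReal.toReal_ne_zero.2 ⟨h1, h2⟩
  simp only [smul_eq_mul, nsmul_eq_mul]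
  field_simp

/-- The gradient of the uniform smoothing `f_μ` over the unit ball of an `L`-smooth function
satisfies `‖∇f_μ(x) − ∇f(x)‖² ≤ μ² L² d² / 4`. -/
theorem uniform_smoothing_gradient_bound
    (d : ℕ) (L μ : ℝ) (hμ : 0 < μ)
    (f : EuclideanSpace ℝ (Fin d) → ℝ)
    (hdiff : Differentiable ℝ f)
    (hlip : ∀ x y, ‖gradient f x - gradient f y‖ ≤ L * ‖x - y‖)
    (fμ : EuclideanSpace ℝ (Fin d) → ℝ)
    (hfμ : ∀ x, fμ x = ∫ v, f (x + μ • v) ∂(uniformBall d))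
    (x : EuclideanSpace ℝ (Fin d)) :
    ‖gradient fμ x - gradient f x‖ ^ 2 ≤ μ ^ 2 * L ^ 2 * (d : ℝ) ^ 2 / 4 := by
  rcases Nat.eq_zero_or_pos d with rfl | hd
  · rw [Subsingleton.elim (gradient fμ x - gradient f x) 0]
    simp
  have hg : ∀ (g : EuclideanSpace ℝ (Fin d) → ℝ) (h : EuclideanSpace ℝ (Fin d) → ℝ) a b,
      ‖gradient g a - gradient h b‖ = ‖fderiv ℝ g a - fderiv ℝ h b‖ := by
    intro g h a b
    unfold gradient
    rw [← map_sub, LinearIsometryEquiv.norm_map]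
  have hl : ∀ a b, ‖fderiv ℝ f a - fderiv ℝ f b‖ ≤ L * ‖a - b‖ := by
    intro a b
    rw [← hg]
    exact hlip a b
  have hl' : ∀ a b, ‖fderiv ℝ f a - fderiv ℝ f b‖ ≤ |L| * ‖a - b‖ := fun a b =>
    (hl a b).trans (by gcongr; exact le_abs_self L)
  have hc : Continuous (fderiv ℝ f) := by
    refine (LipschitzWith.of_dist_le_mul (K := ⟨|L|, abs_nonneg L⟩) ?_).continuous
    intro a b
    rw [dist_eq_norm, dist_eq_norm]
    exact hl' a b
  have hfc : Continuous f := hdiff.continuous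
  have hae := uniformBall_ae d
  have hbdd : ∀ {G : Type} [NormedAddCommGroup G] (g : EuclideanSpace ℝ (Fin d) → G),
      AEStronglyMeasurable g (uniformBall d) → Continuous g → Integrable g (uniformBall d) := by
    intro G _ g hm hgc
    obtain ⟨C, hC⟩ := (isCompact_closedBall (0 : EuclideanSpace ℝ (Fin d)) 1).exists_bound_of_continuousOn
      hgc.continuousOn
    refine Integrable.of_bound hm C ?_
    filter_upwards [hae] with v hv
    exact hC v (by simpa using hv)
  have hcx : Continuous fun v : EuclideanSpace ℝ (Fin d) => fderiv ℝ f (x + μ • v) :=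
    hc.comp (by fun_prop)
  have hint : Integrable (fun v => fderiv ℝ f (x + μ • v)) (uniformBall d) :=
    hbdd _ hcx.aestronglyMeasurable hcx
  have hfm : ∀ y, Continuous fun v : EuclideanSpace ℝ (Fin d) => f (y + μ • v) := fun y =>
    hfc.comp (by fun_prop)
  have hD : HasFDerivAt fμ (∫ v, fderiv ℝ f (x + μ • v) ∂(uniformBall d)) x := by
    rw [funext hfμ]
    refine hasFDerivAt_integral_of_dominated_of_fderiv_le
      (bound := fun _ => ‖fderiv ℝ f x‖ + |L| * (1 + μ))
      (F' := fun y v => fderiv ℝ f (y + μ • v)) (Metric.ball_mem_nhds x one_pos) ?_ ?_ ?_ ?_ ?_ ?_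
    · exact Filter.Eventually.of_forall fun y => (hfm y).aestronglyMeasurable
    · exact hbdd _ (hfm x).aestronglyMeasurable (hfm x)
    · exact hcx.aestronglyMeasurable
    · filter_upwards [hae] with v hv y hy
      have e1 : ‖y + μ • v - x‖ ≤ 1 + μ := by
        have : y + μ • v - x = (y - x) + μ • v := by abel
        rw [this]
        refine (norm_add_le _ _).trans ?_
        rw [norm_smul, Real.norm_of_nonneg hμ.le]
        rw [Metric.mem_ball, dist_eq_norm] at hy
        nlinarith
      have e2 := hl' (y + μ • v) x
      have e3 := norm_le_norm_add_norm_sub' (fderiv ℝ f (y + μ • v)) (fderiv ℝ f x)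
      have e4 : |L| * ‖y + μ • v - x‖ ≤ |L| * (1 + μ) := by gcongr
      linarith
    · exact integrable_const _
    · refine Filter.Eventually.of_forall fun v y _ => ?_
      exact (hasFDerivAt_comp_add_right (μ • v)).2 (hdiff (y + μ • v)).hasFDerivAt
  have key : ‖gradient fμ x - gradient f x‖ ≤ L * μ * (d / (d + 1)) := by
    rw [hg, hD.fderiv]
    have e : (∫ v, fderiv ℝ f (x + μ • v) ∂(uniformBall d)) - fderiv ℝ f x
        = ∫ v, (fderiv ℝ f (x + μ • v) - fderiv ℝ f x) ∂(uniformBall d) := by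
      rw [integral_sub hint (integrable_const _)]
      simp
    rw [e, ← uniformBall_norm d hd, ← integral_const_mul]
    refine norm_integral_le_of_norm_le ?_ ?_
    · exact (hbdd _ continuous_norm.aestronglyMeasurable continuous_norm).const_mul _
    · refine Filter.Eventually.of_forall fun v => ?_
      refine (hl _ _).trans (le_of_eq ?_)
      rw [add_sub_cancel_left, norm_smul, Real.norm_of_nonneg hμ.le]
      ring
  have hd1 : (1:ℝ) ≤ d := by exact_mod_cast hd
  have h6 : (d:ℝ) / (d + 1) ≤ d / 2 := by
    gcongr
    linarith
  calc ‖gradient fμ x - gradient f x‖ ^ 2 ≤ (L * μ * (d / (d + 1))) ^ 2 := by gcongr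
    _ = (L * μ) ^ 2 * (d / (d + 1)) ^ 2 := by ring
    _ ≤ (L * μ) ^ 2 * (d / 2) ^ 2 := by gcongr
    _ = _ := by ring
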